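/- Performance difference lemma for action-independent rewards: Let π1 and π2 be any two policies in a finite MDP whose reward is action-independent, i.e. R(s,a1) = R(s,a2) for all s∈S and a1,a2∈A. Then PerfDiff(π2, π1) ≤ (γ R_max/(1−γ)²) · Err_{d^{π1}}(π1, π2, P). -/

import Mathlib

open Finset

noncomputable section

variable {S A Z : Type*}

/-- State distribution at time `t` when following policy `π` from initial distribution `μ`. -/
def stateDist [Fintype S] [Fintype A] (P : S → A → S → ℝ) (π : S → A → ℝ)
    (μ : S → ℝ) : ℕ → S → ℝ
  | 0 => μ
  | t + 1 => fun s' => ∑ s : S, ∑ a : A, π s a * P s a s' * stateDist P π μ t s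

/-- Discounted visitation distribution `d^π`. -/
def visitation [Fintype S] [Fintype A] (P : S → A → S → ℝ) (π : S → A → ℝ)
    (μ : S → ℝ) (γ : ℝ) (s : S) : ℝ :=
  (1 - γ) * ∑' t : ℕ, γ ^ t * stateDist P π μ t s

/-- Performance `J(π)`. -/
def perf [Fintype S] [Fintype A] (P : S → A → S → ℝ) (R : S → A → ℝ)
    (π : S → A → ℝ) (μ : S → ℝ) (γ : ℝ) : ℝ :=
  ∑' t : ℕ, γ ^ t * ∑ s : S, ∑ a : A, R s a * π s a * stateDist P π μ t s

/-- `PerfDiff(π, π')`. -/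
def perfDiff [Fintype S] [Fintype A] (P : S → A → S → ℝ) (R : S → A → ℝ)
    (μ : S → ℝ) (γ : ℝ) (π π' : S → A → ℝ) : ℝ :=
  |perf P R π μ γ - perf P R π' μ γ|

/-- Total variation distance. -/
def dTV {X : Type*} [Fintype X] (p q : X → ℝ) : ℝ :=
  (1 / 2) * ∑ x : X, |p x - q x|

/-- KL divergence. -/
def dKL {X : Type*} [Fintype X] (p q : X → ℝ) : ℝ :=
  ∑ x : X, p x * Real.log (p x / q x)

/-- Pearson chi-squared divergence (terms with `q x = 0` vanish by the `x / 0 = 0` convention). -/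
def dChi2 {X : Type*} [Fintype X] (p q : X → ℝ) : ℝ :=
  ∑ x : X, (p x - q x) ^ 2 / q x

/-- `Err_ρ(π1, π2, F)` for a reward-like function `F`. -/
def errF [Fintype S] [Fintype A] (ρ : S → ℝ) (π1 π2 : S → A → ℝ) (F : S → A → ℝ) : ℝ :=
  |∑ s : S, ρ s * ∑ a : A, (π1 s a - π2 s a) * F s a|

/-- `Err_ρ(π1, π2, G)` for a transition-like function `G`. -/
def errG [Fintype S] [Fintype A] (ρ : S → ℝ) (π1 π2 : S → A → ℝ) (G : S → A → S → ℝ) : ℝ :=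
  ∑ s' : S, |∑ s : S, ρ s * ∑ a : A, (π1 s a - π2 s a) * G s a s'|

/-- Marginalization `ρ_Z` of a state distribution onto `Z` via `φ`. -/
def margDist [Fintype S] [DecidableEq Z] (φ : S → Z) (ρ : S → ℝ) (z : Z) : ℝ :=
  ∑ s : S, if φ s = z then ρ s else 0

/-- Marginalization `π_Z` of a policy onto `Z` via `φ`, w.r.t. the state distribution `ρ`
(by the `x / 0 = 0` convention it takes a fixed arbitrary value when `ρ_Z(z) = 0`). -/
def margPolicy [Fintype S] [DecidableEq Z] (φ : S → Z) (ρ : S → ℝ) (π : S → A → ℝ)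
    (z : Z) (a : A) : ℝ :=
  (∑ s : S, if φ s = z then ρ s * π s a else 0) / margDist φ ρ z

/-- Log-linear (softmax) policy `π_θ(a|z)`. -/
def softmaxPol {d : ℕ} [Fintype A] (θ : A → Fin d → ℝ) (z : Fin d → ℝ) (a : A) : ℝ :=
  Real.exp (∑ i, θ a i * z i) / ∑ b : A, Real.exp (∑ i, θ b i * z i)

/-- Sum of absolute values of all partial derivatives of `L : ℝ^{d×|A|} → ℝ` at `θ`. -/
def gradL1 {d : ℕ} [Fintype A] [DecidableEq A] (L : (A → Fin d → ℝ) → ℝ)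
    (θ : A → Fin d → ℝ) : ℝ :=
  ∑ a : A, ∑ i : Fin d, |fderiv ℝ L θ (Pi.single a (Pi.single i 1))|

/-!
The visitation distribution `d_π` solves the flow equation `d = (1 - γ) μ + γ d P_π`. Subtracting
the equations of `π1` and `π2` gives `d₂ - d₁ = γ (d₂ - d₁) P_{π2} - γ d₁ (P_{π1} - P_{π2})`. Since
`P_{π2}` does not increase the `ℓ¹` norm, `(1 - γ) ‖d₂ - d₁‖₁ ≤ γ ‖d₁ (P_{π1} - P_{π2})‖₁`, and the
norm on the right is `Err_{d₁}(π1, π2, P)`. When the reward depends on the state alone,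
`(1 - γ) J(π) = ⟨d_π, R⟩`, so Hölder's inequality turns this `ℓ¹` bound into the bound on the
performance difference.
-/

section VecMul

open scoped Matrix

variable [Fintype S]

theorem abs_dotProduct_le_mul_sum_abs {r : S → ℝ} {C : ℝ} (hr : ∀ s, |r s| ≤ C) (x : S → ℝ) :
    |x ⬝ᵥ r| ≤ C * ∑ s, |x s| := by
  calc |x ⬝ᵥ r| ≤ ∑ s, |x s * r s| := abs_sum_le_sum_abs _ _
    _ ≤ ∑ s, C * |x s| := sum_le_sum fun s _ => by
        rw [abs_mul, mul_comm]
        exact mul_le_mul_of_nonneg_right (hr s) (abs_nonneg _)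
    _ = C * ∑ s, |x s| := (mul_sum _ _ _).symm

theorem sum_abs_vecMul_le {T : Type*} [Fintype T] {K : Matrix S T ℝ}
    (hK : ∀ s, ∑ s', |K s s'| ≤ 1) (x : S → ℝ) :
    ∑ s', |(x ᵥ* K) s'| ≤ ∑ s, |x s| := by
  calc ∑ s', |(x ᵥ* K) s'| ≤ ∑ s', ∑ s, |x s * K s s'| :=
        sum_le_sum fun s' _ => abs_sum_le_sum_abs _ _
    _ = ∑ s, |x s| * ∑ s', |K s s'| := by
        rw [sum_comm]
        simp only [abs_mul, mul_sum]
    _ ≤ ∑ s, |x s| := sum_le_sum fun s _ => mul_le_of_le_one_right (abs_nonneg _) (hK s)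

theorem one_sub_abs_mul_sum_abs_sub_le {K L : Matrix S S ℝ} {ν x y : S → ℝ} {γ : ℝ}
    (hL : ∀ s, ∑ s', |L s s'| ≤ 1)
    (hx : x = ν + γ • (x ᵥ* K)) (hy : y = ν + γ • (y ᵥ* L)) :
    (1 - |γ|) * ∑ s, |y s - x s| ≤ |γ| * ∑ s, |(x ᵥ* (K - L)) s| := by
  have hdiff : y - x = γ • ((y - x) ᵥ* L - x ᵥ* (K - L)) := by
    rw [Matrix.sub_vecMul, Matrix.vecMul_sub, sub_sub_sub_cancel_right, smul_sub]
    nth_rewrite 1 [hx, hy]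
    exact add_sub_add_left_eq_sub _ _ _
  have habs (s : S) : |y s - x s| = |γ| * |((y - x) ᵥ* L) s - (x ᵥ* (K - L)) s| :=
    (congrArg abs (congrFun hdiff s)).trans (abs_mul _ _)
  have hle : ∑ s, |y s - x s| ≤ |γ| * (∑ s, |y s - x s| + ∑ s, |(x ᵥ* (K - L)) s|) := by
    calc ∑ s, |y s - x s|
        = |γ| * ∑ s, |((y - x) ᵥ* L) s - (x ᵥ* (K - L)) s| := by
          rw [mul_sum]
          exact sum_congr rfl fun s _ => habs s
      _ ≤ |γ| * (∑ s, |((y - x) ᵥ* L) s| + ∑ s, |(x ᵥ* (K - L)) s|) := by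
          rw [← sum_add_distrib]
          exact mul_le_mul_of_nonneg_left (sum_le_sum fun s _ => abs_sub _ _) (abs_nonneg γ)
      _ ≤ |γ| * (∑ s, |y s - x s| + ∑ s, |(x ᵥ* (K - L)) s|) :=
          mul_le_mul_of_nonneg_left (add_le_add_left (sum_abs_vecMul_le hL _) _) (abs_nonneg γ)
  linarith

end VecMul

section Dynamics

open scoped Matrix

variable [Fintype S] [Fintype A] {P : S → A → S → ℝ} {π : S → A → ℝ} {μ : S → ℝ} {γ : ℝ}

/-- The state transition matrix `P_π` of the policy `π`. Rows are indexed by the current state, so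
state distributions are row vectors and `P_π` acts on them by `ᵥ*`. -/
def transitionMatrix (P : S → A → S → ℝ) (π : S → A → ℝ) : Matrix S S ℝ :=
  Matrix.of fun s s' => ∑ a, π s a * P s a s'

theorem stateDist_succ (t : ℕ) :
    stateDist P π μ (t + 1) = stateDist P π μ t ᵥ* transitionMatrix P π := by
  ext s'
  simp only [stateDist, Matrix.vecMul, dotProduct, transitionMatrix, Matrix.of_apply, mul_sum,
    mul_comm]

theorem errG_eq_sum_abs_vecMul (ρ : S → ℝ) (π1 π2 : S → A → ℝ) (P : S → A → S → ℝ) :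
    errG ρ π1 π2 P =
      ∑ s', |(ρ ᵥ* (transitionMatrix P π1 - transitionMatrix P π2)) s'| := by
  simp only [errG, Matrix.vecMul, dotProduct, Matrix.sub_apply, transitionMatrix, Matrix.of_apply,
    sub_mul, sum_sub_distrib]

theorem sum_abs_transitionMatrix_le_one (hP : ∀ s a, ∑ s', |P s a s'| ≤ 1)
    (hπ : ∀ s, ∑ a, |π s a| ≤ 1) (s : S) : ∑ s', |transitionMatrix P π s s'| ≤ 1 :=
  -- Row `s` of `P_π` is the row vector `π s` multiplied by the matrix `P s`.
  (sum_abs_vecMul_le (K := Matrix.of (P s)) (hP s) (π s)).trans (hπ s)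

theorem sum_abs_stateDist_le (hK : ∀ s, ∑ s', |transitionMatrix P π s s'| ≤ 1) (t : ℕ) :
    ∑ s, |stateDist P π μ t s| ≤ ∑ s, |μ s| := by
  induction t with
  | zero => rfl
  | succ t ih =>
    rw [stateDist_succ]
    exact (sum_abs_vecMul_le hK _).trans ih

theorem summable_pow_mul_stateDist (hK : ∀ s, ∑ s', |transitionMatrix P π s s'| ≤ 1)
    (hγ : |γ| < 1) (s : S) : Summable fun t => γ ^ t * stateDist P π μ t s := by
  refine Summable.of_norm_bounded
    ((summable_geometric_of_lt_one (abs_nonneg γ) hγ).mul_right (∑ s, |μ s|)) fun t => ?_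
  rw [Real.norm_eq_abs, abs_mul, abs_pow]
  gcongr
  exact (single_le_sum (f := fun s => |stateDist P π μ t s|) (fun _ _ => abs_nonneg _)
    (mem_univ s)).trans (sum_abs_stateDist_le hK t)

theorem hasSum_mul_dotProduct_stateDist
    (hsum : ∀ s, Summable fun t => γ ^ t * stateDist P π μ t s) (r : S → ℝ) :
    HasSum (fun t => (1 - γ) * (γ ^ t * (stateDist P π μ t ⬝ᵥ r))) (visitation P π μ γ ⬝ᵥ r) := by
  have h := hasSum_sum (s := univ) fun s _ => ((hsum s).hasSum.mul_left (1 - γ)).mul_right (r s)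
  simpa only [dotProduct, mul_sum, visitation, mul_assoc] using h

theorem visitation_eq_add_smul_vecMul
    (hsum : ∀ s, Summable fun t => γ ^ t * stateDist P π μ t s) :
    visitation P π μ γ =
      (1 - γ) • μ + γ • (visitation P π μ γ ᵥ* transitionMatrix P π) := by
  ext s'
  have htail := (hasSum_mul_dotProduct_stateDist hsum fun s => transitionMatrix P π s s').mul_left γ
  have hshift (t : ℕ) :
      (1 - γ) * (γ ^ (t + 1) * stateDist P π μ (t + 1) s') =
        γ * ((1 - γ) * (γ ^ t * (stateDist P π μ t ⬝ᵥ fun s => transitionMatrix P π s s'))) := by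
    rw [stateDist_succ, Matrix.vecMul]
    ring
  calc visitation P π μ γ s'
      = (1 - γ) * μ s' + ∑' t, (1 - γ) * (γ ^ (t + 1) * stateDist P π μ (t + 1) s') := by
        rw [visitation, (hsum s').tsum_eq_zero_add, mul_add, tsum_mul_left, pow_zero, one_mul,
          stateDist]
    _ = (1 - γ) * μ s' + γ * (visitation P π μ γ ᵥ* transitionMatrix P π) s' := by
        rw [tsum_congr hshift, htail.tsum_eq, Matrix.vecMul]

theorem one_sub_mul_perf_eq_visitation_dotProduct
    (hsum : ∀ s, Summable fun t => γ ^ t * stateDist P π μ t s) (hπ : ∀ s, ∑ a, π s a = 1)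
    (r : S → ℝ) :
    (1 - γ) * perf P (fun s _ => r s) π μ γ = visitation P π μ γ ⬝ᵥ r := by
  have hstep (t : ℕ) :
      ∑ s, ∑ a, r s * π s a * stateDist P π μ t s = stateDist P π μ t ⬝ᵥ r := by
    simp only [← sum_mul, ← mul_sum, hπ, mul_one, dotProduct, mul_comm]
  simp only [perf, hstep]
  rw [← tsum_mul_left, (hasSum_mul_dotProduct_stateDist hsum r).tsum_eq]

theorem abs_one_sub_mul_perfDiff_le {π1 π2 : S → A → ℝ}
    (hsum1 : ∀ s, Summable fun t => γ ^ t * stateDist P π1 μ t s)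
    (hsum2 : ∀ s, Summable fun t => γ ^ t * stateDist P π2 μ t s)
    (hπ1 : ∀ s, ∑ a, π1 s a = 1) (hπ2 : ∀ s, ∑ a, π2 s a = 1)
    {r : S → ℝ} {C : ℝ} (hr : ∀ s, |r s| ≤ C) :
    |1 - γ| * perfDiff P (fun s _ => r s) μ γ π2 π1 ≤
      C * ∑ s, |visitation P π2 μ γ s - visitation P π1 μ γ s| := by
  rw [perfDiff, ← abs_mul, mul_sub, one_sub_mul_perf_eq_visitation_dotProduct hsum2 hπ2,
    one_sub_mul_perf_eq_visitation_dotProduct hsum1 hπ1, ← sub_dotProduct]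
  exact abs_dotProduct_le_mul_sum_abs hr _

end Dynamics

theorem performance_difference_lemma_action_independent_rewards_general
    [Fintype S] [Fintype A]
    (P : S → A → S → ℝ) (hP : ∀ s a, ∑ s', |P s a s'| ≤ 1)
    (r : S → ℝ) (Rmax : ℝ) (hRmax : 0 ≤ Rmax) (hr : ∀ s, |r s| ≤ Rmax)
    (μ : S → ℝ) (γ : ℝ) (hγ0 : 0 ≤ γ) (hγ1 : γ < 1)
    (π1 π2 : S → A → ℝ)
    (hπ10 : ∀ s a, 0 ≤ π1 s a) (hπ11 : ∀ s, ∑ a, π1 s a = 1)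
    (hπ20 : ∀ s a, 0 ≤ π2 s a) (hπ21 : ∀ s, ∑ a, π2 s a = 1) :
    perfDiff P (fun s _ => r s) μ γ π2 π1 ≤
      (γ * Rmax / (1 - γ) ^ 2) * errG (visitation P π1 μ γ) π1 π2 P := by
  have hγ : 0 < 1 - γ := sub_pos.mpr hγ1
  have hK1 := sum_abs_transitionMatrix_le_one (π := π1) hP fun s => by
    simp only [abs_of_nonneg (hπ10 _ _), hπ11 s, le_refl]
  have hK2 := sum_abs_transitionMatrix_le_one (π := π2) hP fun s => by
    simp only [abs_of_nonneg (hπ20 _ _), hπ21 s, le_refl]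
  have hγabs : |γ| < 1 := (abs_of_nonneg hγ0).trans_lt hγ1
  have hsum1 := summable_pow_mul_stateDist (μ := μ) hK1 hγabs
  have hsum2 := summable_pow_mul_stateDist (μ := μ) hK2 hγabs
  have hvisit := one_sub_abs_mul_sum_abs_sub_le hK2
    (visitation_eq_add_smul_vecMul hsum1) (visitation_eq_add_smul_vecMul hsum2)
  rw [← errG_eq_sum_abs_vecMul, abs_of_nonneg hγ0] at hvisit
  have hperf := abs_one_sub_mul_perfDiff_le hsum1 hsum2 hπ11 hπ21 hr
  rw [abs_of_pos hγ] at hperf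
  rw [div_mul_eq_mul_div, le_div_iff₀ (pow_pos hγ 2)]
  linarith [mul_le_mul_of_nonneg_left hperf hγ.le, mul_le_mul_of_nonneg_left hvisit hRmax]

theorem performance_difference_lemma_action_independent_rewards
    [Fintype S] [Fintype A] [Nonempty S] [Nonempty A]
    (P : S → A → S → ℝ) (hP0 : ∀ s a s', 0 ≤ P s a s')
    (hP1 : ∀ s a, ∑ s' : S, P s a s' = 1)
    (R : S → A → ℝ) (Rmax : ℝ) (hRmax : 0 ≤ Rmax) (hR : ∀ s a, |R s a| ≤ Rmax)
    (μ : S → ℝ) (hμ0 : ∀ s, 0 ≤ μ s) (hμ1 : ∑ s : S, μ s = 1)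
    (γ : ℝ) (hγ0 : 0 ≤ γ) (hγ1 : γ < 1)
    (hRa : ∀ s a1 a2, R s a1 = R s a2)
    (π1 π2 : S → A → ℝ)
    (hπ10 : ∀ s a, 0 ≤ π1 s a) (hπ11 : ∀ s, ∑ a : A, π1 s a = 1)
    (hπ20 : ∀ s a, 0 ≤ π2 s a) (hπ21 : ∀ s, ∑ a : A, π2 s a = 1) :
    perfDiff P R μ γ π2 π1 ≤
      (γ * Rmax / (1 - γ) ^ 2) * errG (visitation P π1 μ γ) π1 π2 P := by
  obtain ⟨r, rfl⟩ : ∃ r : S → ℝ, R = fun s _ => r s :=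
    ⟨fun s => R s (Classical.arbitrary A), funext₂ fun s a => hRa s a _⟩
  exact performance_difference_lemma_action_independent_rewards_general P
    (fun s a => by simp only [abs_of_nonneg (hP0 _ _ _), hP1, le_refl]) r Rmax hRmax
    (fun s => hR s (Classical.arbitrary A)) μ γ hγ0 hγ1 π1 π2 hπ10 hπ11 hπ20 hπ21
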